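/- (Gagliardo–Nirenberg interpolation inequality.) Let d ≥ 1 be an integer and σ > 0 a real number with σ d < 2(σ + 1). Then there exists a constant C > 0 such that for every continuously differentiable function u : ℝ^d → ℂ with compact support, ‖u‖_{L^{2+2σ}} ≤ C ‖u‖_{L²}^{1 − σd/(2(1+σ))} ‖∇u‖_{L²}^{σd/(2(1+σ))}. -/

import Mathlib

open MeasureTheory

/-!
The `W^{1,1}` Sobolev inequality, applied to `‖u‖ ^ s` and combined with Hölder's inequality, gives
`‖u‖_{n's}^s ≤ C ‖u‖_{p'(s-1)}^{s-1} ‖∇u‖_p`, where `n'` is the exponent conjugate to the dimension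
(`n' = ∞` in dimension one). Some `s` satisfies `b ≤ p'(s-1) ≤ n's` and `q ≤ n's`. Interpolating
`‖u‖_{p'(s-1)}` between `‖u‖_b` and `‖u‖_{n's}` then leaves on the right a power of `‖u‖_{n's}`
smaller than `s`, which is absorbed on the left because `‖u‖_{n's}` is finite. This is the
inequality for the exponent `n's`; interpolating with `‖u‖_b` once more gives it for `q`.
-/

open Module Set
open scoped ENNReal NNReal

theorem toReal_inv_mul_ofReal (p : ℝ≥0∞) {s : ℝ} (hs : 0 ≤ s) :
    (p * .ofReal s).toReal⁻¹ = p.toReal⁻¹ / s := by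
  rw [ENNReal.toReal_mul, ENNReal.toReal_ofReal hs, mul_inv, div_eq_mul_inv]

theorem toReal_inv_add_toReal_inv_eq_one (p q : ℝ≥0∞) [ENNReal.HolderConjugate p q] :
    p.toReal⁻¹ + q.toReal⁻¹ = 1 := by
  have hp : p ≠ 0 := ENNReal.HolderConjugate.ne_zero p q
  have hq : q ≠ 0 := ENNReal.HolderConjugate.ne_zero q p
  rw [← ENNReal.toReal_inv, ← ENNReal.toReal_inv, ← ENNReal.toReal_add (by finiteness)
    (by finiteness), ENNReal.HolderConjugate.inv_add_inv_eq_one p q, ENNReal.toReal_one]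

theorem le_rpow_inv_sub_of_rpow_le_mul_rpow {x c : ℝ≥0∞} {s t : ℝ} (hx : x ≠ ∞)
    (hts : t < s) (h : x ^ s ≤ c * x ^ t) : x ≤ c ^ (s - t)⁻¹ := by
  obtain rfl | hx₀ := eq_or_ne x 0
  · exact zero_le
  rw [ENNReal.le_rpow_inv_iff (sub_pos.2 hts), ENNReal.rpow_sub _ _ hx₀ hx]
  exact ENNReal.div_le_of_le_mul h

-- With `N = 1 / n'` and `P = 1 / p'` the conclusion says that `q ≤ n' s` and
-- `b ≤ p' (s - 1) ≤ n' s`; the witness is the smallest such `s`.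
theorem exists_sobolev_power {b q N P : ℝ} (hb : 0 < b) (hbq : b ≤ q) (hP : 0 < P)
    (h : N ≤ P + q⁻¹) :
    ∃ s > 1, N / s ≤ q⁻¹ ∧ N / s ≤ P / (s - 1) ∧ P / (s - 1) ≤ b⁻¹ := by
  have hq : 0 < q := hb.trans_le hbq
  have hbP : 0 < b * P := mul_pos hb hP
  have hbN : b * N ≤ b * P + 1 :=
    calc b * N ≤ b * (P + q⁻¹) := by gcongr
      _ ≤ b * (P + b⁻¹) := by gcongr
      _ = b * P + 1 := by field_simp
  have hqN : q * N ≤ q * P + 1 :=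
    calc q * N ≤ q * (P + q⁻¹) := by gcongr
      _ = q * P + 1 := by field_simp
  set s := max (1 + b * P) (q * N)
  have hs_left : 1 + b * P ≤ s := le_max_left _ _
  have hs_right : q * N ≤ s := le_max_right _ _
  have hs_mid : N * (s - 1) ≤ P * s := by
    obtain ⟨hs, -⟩ | ⟨hs, hlt⟩ := max_cases (1 + b * P) (q * N)
    · linear_combination (N - P) * hs + P * hbN
    · have hN : 0 < N := pos_of_mul_pos_right (by linarith) hq.le
      linear_combination (N - P) * hs + N * hqN
  have hs : 1 < s := by linarith
  refine ⟨s, hs, ?_, ?_, ?_⟩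
  · rwa [div_le_iff₀ (by linarith), ← div_eq_inv_mul, le_div_iff₀' hq]
  · rwa [div_le_div_iff₀ (by linarith) (by linarith)]
  · rw [div_le_iff₀ (by linarith), ← div_eq_inv_mul, le_div_iff₀' hb]
    linarith

section Interpolation

variable {α F : Type*} {m : MeasurableSpace α} {μ : Measure α} [NormedAddCommGroup F]

-- Since `∞.toReal⁻¹ = 0`, the relation between the exponents is the right one at `∞` too.
theorem eLpNorm_le_eLpNorm_rpow_mul_eLpNorm_rpow {f : α → F} (hf : AEStronglyMeasurable f μ)
    {p q r : ℝ≥0∞} (hp : p ≠ 0) (hq : q ≠ 0) (hr : r ≠ 0) {θ : ℝ} (hθ : θ ∈ Icc 0 1)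
    (h : r.toReal⁻¹ = (1 - θ) * p.toReal⁻¹ + θ * q.toReal⁻¹) :
    eLpNorm f r μ ≤ eLpNorm f p μ ^ (1 - θ) * eLpNorm f q μ ^ θ := by
  have h_inv : r⁻¹ = .ofReal (1 - θ) * p⁻¹ + .ofReal θ * q⁻¹ := by
    rw [← ENNReal.toReal_eq_toReal_iff' (by finiteness) (by finiteness),
      ENNReal.toReal_add (by finiteness) (by finiteness)]
    simpa [hθ.1, hθ.2] using h
  obtain rfl | hθ₀ := hθ.1.eq_or_lt
  · obtain rfl : r = p := by simpa using h_inv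
    simp
  obtain rfl | hθ₁ := hθ.2.eq_or_lt
  · obtain rfl : r = q := by simpa using h_inv
    simp
  have h1θ : 0 < 1 - θ := sub_pos.2 hθ₁
  have : ENNReal.HolderTriple (p / .ofReal (1 - θ)) (q / .ofReal θ) r := by
    constructor
    rw [ENNReal.inv_div (by simp) (by simp [hθ₁]), ENNReal.inv_div (by simp) (by simp [hθ₀]),
      h_inv, div_eq_mul_inv, div_eq_mul_inv]
  calc eLpNorm f r μ = eLpNorm ((fun x ↦ ‖f x‖ ^ (1 - θ)) • fun x ↦ ‖f x‖ ^ θ) r μ := by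
        refine eLpNorm_congr_norm_ae (.of_forall fun x ↦ ?_)
        rw [Pi.smul_apply', smul_eq_mul, ← Real.rpow_add_of_nonneg (norm_nonneg _) h1θ.le hθ₀.le]
        simp
    _ ≤ eLpNorm (fun x ↦ ‖f x‖ ^ (1 - θ)) (p / .ofReal (1 - θ)) μ *
          eLpNorm (fun x ↦ ‖f x‖ ^ θ) (q / .ofReal θ) μ :=
        eLpNorm_smul_le_mul_eLpNorm (hf.norm.aemeasurable.pow_const _).aestronglyMeasurable
          (hf.norm.aemeasurable.pow_const _).aestronglyMeasurable
    _ = eLpNorm f p μ ^ (1 - θ) * eLpNorm f q μ ^ θ := by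
        rw [eLpNorm_norm_rpow f h1θ, eLpNorm_norm_rpow f hθ₀,
          ENNReal.div_mul_cancel (by simp [hθ₁]) (by simp),
          ENNReal.div_mul_cancel (by simp [hθ₀]) (by simp)]

end Interpolation

section Sobolev

variable {E F : Type*} [NormedAddCommGroup E] [NormedSpace ℝ E]
  [NormedAddCommGroup F] [NormedSpace ℝ F]

theorem enorm_le_lintegral_enorm_fderiv_comp {u : E → F} (hu : ContDiff ℝ 1 u)
    (h2u : HasCompactSupport u) (e : ℝ ≃L[ℝ] E) (x : E) :
    ‖u x‖ₑ ≤ ‖(e : ℝ →L[ℝ] E)‖ₑ * ∫⁻ t, ‖fderiv ℝ u (e t)‖ₑ := by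
  obtain ⟨t, rfl⟩ := e.surjective x
  have hderiv (y : ℝ) : ‖deriv (u ∘ e) y‖ₑ ≤ ‖(e : ℝ →L[ℝ] E)‖ₑ * ‖fderiv ℝ u (e y)‖ₑ := by
    have h_enorm : ‖deriv (u ∘ e) y‖ₑ = ‖fderiv ℝ (u ∘ e) y‖ₑ := by
      simp only [← ofReal_norm, norm_deriv_eq_norm_fderiv]
    rw [h_enorm, e.comp_right_fderiv, mul_comm]
    exact ContinuousLinearMap.opENorm_comp_le _ _
  calc ‖u (e t)‖ₑ ≤ ∫⁻ y in Iic t, ‖deriv (u ∘ e) y‖ₑ :=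
        (h2u.comp_homeomorph e.toHomeomorph).enorm_le_lintegral_Ici_deriv (hu.comp e.contDiff) t
    _ ≤ ∫⁻ y, ‖deriv (u ∘ e) y‖ₑ := setLIntegral_le_lintegral _ _
    _ ≤ ∫⁻ y, ‖(e : ℝ →L[ℝ] E)‖ₑ * ‖fderiv ℝ u (e y)‖ₑ := lintegral_mono hderiv
    _ = ‖(e : ℝ →L[ℝ] E)‖ₑ * ∫⁻ y, ‖fderiv ℝ u (e y)‖ₑ :=
        lintegral_const_mul' _ _ (by finiteness)

variable [FiniteDimensional ℝ E] [MeasurableSpace E] [BorelSpace E] (μ : Measure E)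
  [μ.IsAddHaarMeasure]

theorem exists_eLpNorm_top_le_mul_eLpNorm_fderiv_one (hE : finrank ℝ E = 1) :
    ∃ C : ℝ≥0, ∀ u : E → F, ContDiff ℝ 1 u → HasCompactSupport u →
      eLpNorm u ∞ μ ≤ C * eLpNorm (fderiv ℝ u) 1 μ := by
  let e : ℝ ≃L[ℝ] E := ContinuousLinearEquiv.ofFinrankEq (by simp [hE])
  let ν : Measure E := volume.map e
  have : ν.IsAddHaarMeasure := e.isAddHaarMeasure_map volume
  let c : ℝ≥0 := ν.addHaarScalarFactor μ
  refine ⟨‖(e : ℝ →L[ℝ] E)‖₊ * c, fun u hu h2u ↦ ?_⟩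
  rw [eLpNorm_exponent_top, eLpNorm_one_eq_lintegral_enorm]
  refine essSup_le_of_ae_le _ (.of_forall fun x ↦ ?_)
  have hmap : ∫⁻ y, ‖fderiv ℝ u y‖ₑ ∂ν = ∫⁻ t, ‖fderiv ℝ u (e t)‖ₑ :=
    e.toHomeomorph.measurableEmbedding.lintegral_map _
  calc ‖u x‖ₑ ≤ ‖(e : ℝ →L[ℝ] E)‖ₑ * ∫⁻ y, ‖fderiv ℝ u y‖ₑ ∂ν :=
        hmap ▸ enorm_le_lintegral_enorm_fderiv_comp hu h2u e x
    _ = ‖(e : ℝ →L[ℝ] E)‖ₑ * (c * ∫⁻ y, ‖fderiv ℝ u y‖ₑ ∂μ) := by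
        rw [Measure.isAddLeftInvariant_eq_smul ν μ, lintegral_smul_measure]
        rfl
    _ = ↑(‖(e : ℝ →L[ℝ] E)‖₊ * c) * ∫⁻ y, ‖fderiv ℝ u y‖ₑ ∂μ := by
        rw [ENNReal.coe_mul, mul_assoc]
        rfl

theorem exists_eLpNorm_le_mul_eLpNorm_fderiv_one
    (n' : ℝ≥0∞) [hn : ENNReal.HolderConjugate (finrank ℝ E) n'] :
    ∃ C : ℝ≥0, ∀ u : E → F, ContDiff ℝ 1 u → HasCompactSupport u →
      eLpNorm u n' μ ≤ C * eLpNorm (fderiv ℝ u) 1 μ := by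
  obtain rfl | hn' := eq_or_ne n' ∞
  · have : (finrank ℝ E : ℝ≥0∞) = 1 := (ENNReal.HolderConjugate.eq_top_iff_eq_one ∞ _).1 rfl
    exact exists_eLpNorm_top_le_mul_eLpNorm_fderiv_one μ (by exact_mod_cast this)
  lift n' to ℝ≥0 using hn'
  have : NNReal.HolderConjugate (finrank ℝ E) n' := ENNReal.holderConjugate_coe_iff.1 hn
  exact ⟨_, fun u hu h2u ↦ eLpNorm_le_eLpNorm_fderiv_one μ hu h2u this⟩

end Sobolev

section PowerTrick

variable {E F : Type*} [NormedAddCommGroup E] [NormedSpace ℝ E] [FiniteDimensional ℝ E]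
  [MeasurableSpace E] [BorelSpace E] (μ : Measure E)
  [NormedAddCommGroup F] [InnerProductSpace ℝ F]

theorem eLpNorm_fderiv_norm_rpow_le {u : E → F} (hu : ContDiff ℝ 1 u) {s : ℝ} (hs : 1 < s)
    (p p' r : ℝ≥0∞) [ENNReal.HolderTriple p' p r] :
    eLpNorm (fderiv ℝ fun x ↦ ‖u x‖ ^ s) r μ ≤
      .ofReal s * eLpNorm u (p' * .ofReal (s - 1)) μ ^ (s - 1) * eLpNorm (fderiv ℝ u) p μ := by
  have hu_norm : AEStronglyMeasurable (fun x ↦ ‖u x‖ ^ (s - 1)) μ :=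
    (hu.continuous.norm.rpow_const (by grind)).aestronglyMeasurable
  have hu_fderiv : AEStronglyMeasurable (fderiv ℝ u) μ :=
    (hu.continuous_fderiv one_ne_zero).aestronglyMeasurable
  calc eLpNorm (fderiv ℝ fun x ↦ ‖u x‖ ^ s) r μ
      ≤ .ofReal s * eLpNorm ((fun x ↦ ‖u x‖ ^ (s - 1)) • fderiv ℝ u) r μ := by
        refine eLpNorm_le_mul_eLpNorm_of_ae_le_mul (.of_forall fun x ↦ ?_) r
        refine (norm_fderiv_norm_rpow_le (hu.differentiable one_ne_zero) hs).trans_eq ?_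
        rw [Pi.smul_apply', norm_smul, Real.norm_of_nonneg (by positivity), mul_assoc]
    _ ≤ .ofReal s *
          (eLpNorm (fun x ↦ ‖u x‖ ^ (s - 1)) p' μ * eLpNorm (fderiv ℝ u) p μ) := by
        gcongr
        exact eLpNorm_smul_le_mul_eLpNorm hu_fderiv hu_norm
    _ = _ := by rw [eLpNorm_norm_rpow u (sub_pos.2 hs), mul_assoc]

variable [μ.IsAddHaarMeasure]

theorem exists_eLpNorm_rpow_le_mul_eLpNorm_rpow_mul_eLpNorm_fderiv
    (n' p p' : ℝ≥0∞) [ENNReal.HolderConjugate (finrank ℝ E) n'] [ENNReal.HolderConjugate p' p]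
    {s : ℝ} (hs : 1 < s) :
    ∃ C : ℝ≥0, ∀ u : E → F, ContDiff ℝ 1 u → HasCompactSupport u →
      eLpNorm u (n' * .ofReal s) μ ^ s ≤
        C * eLpNorm u (p' * .ofReal (s - 1)) μ ^ (s - 1) * eLpNorm (fderiv ℝ u) p μ := by
  obtain ⟨C, hC⟩ := exists_eLpNorm_le_mul_eLpNorm_fderiv_one (F := ℝ) μ n'
  refine ⟨C * s.toNNReal, fun u hu h2u ↦ ?_⟩
  have hcs : HasCompactSupport fun x ↦ ‖u x‖ ^ s :=
    h2u.norm.comp_left (g := (· ^ s)) (Real.zero_rpow (by linarith))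
  calc eLpNorm u (n' * .ofReal s) μ ^ s = eLpNorm (fun x ↦ ‖u x‖ ^ s) n' μ :=
        (eLpNorm_norm_rpow u (by linarith)).symm
    _ ≤ C * eLpNorm (fderiv ℝ fun x ↦ ‖u x‖ ^ s) 1 μ := hC _ (hu.norm_rpow hs) hcs
    _ ≤ C * (.ofReal s * eLpNorm u (p' * .ofReal (s - 1)) μ ^ (s - 1) *
          eLpNorm (fderiv ℝ u) p μ) := by
        gcongr
        exact eLpNorm_fderiv_norm_rpow_le μ hu hs p p' 1
    _ = _ := by
        rw [ENNReal.coe_mul, mul_assoc, mul_assoc, mul_assoc, ENNReal.ofReal]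

end PowerTrick

/-- The first-order Gagliardo–Nirenberg inequality
`‖u‖_{L^q} ≤ C ‖u‖_{L^b} ^ (1 - τ) ‖∇u‖_{L^p} ^ τ`, with `C` uniform over the compactly supported
`C¹` functions `u : E → F`. The norms take values in `ℝ≥0∞`, whereas `C` is finite. -/
def GagliardoNirenberg {E : Type*} (F : Type*) [NormedAddCommGroup E] [NormedSpace ℝ E]
    [MeasurableSpace E] [NormedAddCommGroup F] [NormedSpace ℝ F] (μ : Measure E) (b p q : ℝ≥0∞)
    (τ : ℝ) : Prop :=
  ∃ C : ℝ≥0, ∀ u : E → F, ContDiff ℝ 1 u → HasCompactSupport u →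
    eLpNorm u q μ ≤ C * eLpNorm u b μ ^ (1 - τ) * eLpNorm (fderiv ℝ u) p μ ^ τ

namespace GagliardoNirenberg

variable {E F : Type*} [NormedAddCommGroup E] [NormedSpace ℝ E] [MeasurableSpace E]
  [OpensMeasurableSpace E] [NormedAddCommGroup F] [NormedSpace ℝ F]
  {μ : Measure E} {b p q : ℝ≥0∞} {τ : ℝ}

theorem interpolate [SecondCountableTopology E] {r : ℝ≥0∞} {φ : ℝ}
    (h : GagliardoNirenberg F μ b p q τ) (hb : b ≠ 0) (hq : q ≠ 0) (hr : r ≠ 0) (hτ : τ ≤ 1)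
    (hφ : φ ∈ Icc 0 1) (hr_inv : r.toReal⁻¹ = (1 - φ) * b.toReal⁻¹ + φ * q.toReal⁻¹) :
    GagliardoNirenberg F μ b p r (φ * τ) := by
  obtain ⟨C, hC⟩ := h
  refine ⟨C ^ φ, fun u hu h2u ↦ ?_⟩
  have hτ' : 0 ≤ 1 - τ := sub_nonneg.2 hτ
  have hφ' : 0 ≤ 1 - φ := sub_nonneg.2 hφ.2
  set A := eLpNorm u b μ
  set G := eLpNorm (fderiv ℝ u) p μ
  calc eLpNorm u r μ ≤ A ^ (1 - φ) * eLpNorm u q μ ^ φ :=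
        eLpNorm_le_eLpNorm_rpow_mul_eLpNorm_rpow hu.continuous.aestronglyMeasurable hb hq hr hφ
          hr_inv
    _ ≤ A ^ (1 - φ) * (C * A ^ (1 - τ) * G ^ τ) ^ φ := by
        gcongr
        exacts [hφ.1, hC u hu h2u]
    _ = C ^ φ * (A ^ (1 - φ) * A ^ ((1 - τ) * φ)) * G ^ (τ * φ) := by
        rw [ENNReal.mul_rpow_of_nonneg _ _ hφ.1, ENNReal.mul_rpow_of_nonneg _ _ hφ.1,
          ← ENNReal.rpow_mul, ← ENNReal.rpow_mul]
        ring
    _ = ↑(C ^ φ) * A ^ (1 - φ * τ) * G ^ (φ * τ) := by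
        rw [← ENNReal.rpow_add_of_nonneg _ _ hφ' (mul_nonneg hτ' hφ.1),
          ENNReal.coe_rpow_of_nonneg _ hφ.1]
        ring_nf

theorem exists_toReal_eLpNorm_le [IsFiniteMeasureOnCompacts μ]
    (h : GagliardoNirenberg F μ b p q τ) (hτ : τ ∈ Icc 0 1) :
    ∃ C > (0 : ℝ), ∀ u : E → F, ContDiff ℝ 1 u → HasCompactSupport u →
      (eLpNorm u q μ).toReal ≤
        C * (eLpNorm u b μ).toReal ^ (1 - τ) * (eLpNorm (fderiv ℝ u) p μ).toReal ^ τ := by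
  obtain ⟨C, hC⟩ := h
  refine ⟨C + 1, by positivity, fun u hu h2u ↦ ?_⟩
  have hA : eLpNorm u b μ ≠ ∞ := (hu.continuous.memLp_of_hasCompactSupport h2u).eLpNorm_ne_top
  have hG : eLpNorm (fderiv ℝ u) p μ ≠ ∞ :=
    ((hu.continuous_fderiv one_ne_zero).memLp_of_hasCompactSupport (h2u.fderiv ℝ)).eLpNorm_ne_top
  have hAτ := ENNReal.rpow_ne_top_of_nonneg (sub_nonneg.2 hτ.2) hA
  have hGτ := ENNReal.rpow_ne_top_of_nonneg hτ.1 hG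
  calc (eLpNorm u q μ).toReal
      ≤ (C * eLpNorm u b μ ^ (1 - τ) * eLpNorm (fderiv ℝ u) p μ ^ τ).toReal :=
        ENNReal.toReal_mono (by finiteness) (hC u hu h2u)
    _ = C * (eLpNorm u b μ).toReal ^ (1 - τ) * (eLpNorm (fderiv ℝ u) p μ).toReal ^ τ := by
        rw [ENNReal.toReal_mul, ENNReal.toReal_mul, ENNReal.toReal_rpow, ENNReal.toReal_rpow,
          ENNReal.coe_toReal]
    _ ≤ _ := by
        gcongr
        linarith

end GagliardoNirenberg

section Main

variable {E : Type*} (F : Type*) [NormedAddCommGroup E] [NormedSpace ℝ E] [FiniteDimensional ℝ E]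
  [MeasurableSpace E] [BorelSpace E] (μ : Measure E) [μ.IsAddHaarMeasure]
  [NormedAddCommGroup F] [InnerProductSpace ℝ F]

theorem gagliardoNirenberg_of_interpolation (n' p p' : ℝ≥0∞)
    [ENNReal.HolderConjugate (finrank ℝ E) n'] [ENNReal.HolderConjugate p' p] {b : ℝ≥0∞}
    (hb : b ≠ 0) {s θ : ℝ} (hs : 1 < s) (hθ : θ ∈ Icc 0 1)
    (h : (p' * .ofReal (s - 1)).toReal⁻¹ =
      (1 - θ) * b.toReal⁻¹ + θ * (n' * .ofReal s).toReal⁻¹) :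
    GagliardoNirenberg F μ b p (n' * .ofReal s) (s - θ * (s - 1))⁻¹ := by
  obtain ⟨C, hC⟩ := exists_eLpNorm_rpow_le_mul_eLpNorm_rpow_mul_eLpNorm_fderiv (F := F) μ n' p p'
    hs
  have hs' : 0 < s - 1 := sub_pos.2 hs
  set m := s - θ * (s - 1) with hm
  have hm₀ : 0 < m := by nlinarith [hθ.2]
  have hn₀ : n' ≠ 0 := ENNReal.HolderConjugate.ne_zero n' (finrank ℝ E)
  have hp₀ : p' ≠ 0 := ENNReal.HolderConjugate.ne_zero p' p
  refine ⟨C ^ m⁻¹, fun u hu h2u ↦ ?_⟩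
  set X := eLpNorm u (n' * .ofReal s) μ
  set A := eLpNorm u b μ
  set G := eLpNorm (fderiv ℝ u) p μ
  have hX : X ≠ ∞ := (hu.continuous.memLp_of_hasCompactSupport h2u).eLpNorm_ne_top
  have hmid : eLpNorm u (p' * .ofReal (s - 1)) μ ≤ A ^ (1 - θ) * X ^ θ :=
    eLpNorm_le_eLpNorm_rpow_mul_eLpNorm_rpow hu.continuous.aestronglyMeasurable hb
      (by simp [hn₀, zero_lt_one.trans hs]) (by simp [hp₀, hs]) hθ h
  have hself : X ^ s ≤ C * A ^ ((1 - θ) * (s - 1)) * G * X ^ (θ * (s - 1)) :=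
    calc X ^ s ≤ C * eLpNorm u (p' * .ofReal (s - 1)) μ ^ (s - 1) * G := hC u hu h2u
      _ ≤ C * (A ^ (1 - θ) * X ^ θ) ^ (s - 1) * G := by gcongr
      _ = C * A ^ ((1 - θ) * (s - 1)) * G * X ^ (θ * (s - 1)) := by
          rw [ENNReal.mul_rpow_of_nonneg _ _ hs'.le, ← ENNReal.rpow_mul, ← ENNReal.rpow_mul]
          ring
  calc X ≤ (C * A ^ ((1 - θ) * (s - 1)) * G) ^ m⁻¹ :=
        le_rpow_inv_sub_of_rpow_le_mul_rpow hX (sub_pos.1 hm₀) hself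
    _ = ↑(C ^ m⁻¹) * A ^ (1 - m⁻¹) * G ^ m⁻¹ := by
        have hm_inv : 0 ≤ m⁻¹ := (inv_pos.2 hm₀).le
        have hA : (1 - θ) * (s - 1) * m⁻¹ = 1 - m⁻¹ := by
          field_simp
          linear_combination -hm
        rw [ENNReal.mul_rpow_of_nonneg _ _ hm_inv, ENNReal.mul_rpow_of_nonneg _ _ hm_inv,
          ← ENNReal.rpow_mul, hA, ENNReal.coe_rpow_of_nonneg _ hm_inv]

theorem exists_gagliardoNirenberg_mul_ofReal {n' p p' : ℝ≥0∞}
    [ENNReal.HolderConjugate (finrank ℝ E) n'] [ENNReal.HolderConjugate p' p] {b : ℝ≥0∞}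
    (hb : b ≠ 0) {s : ℝ} (hs : 1 < s)
    (hlower : n'.toReal⁻¹ / s ≤ p'.toReal⁻¹ / (s - 1))
    (hupper : p'.toReal⁻¹ / (s - 1) ≤ b.toReal⁻¹) :
    ∃ τ ≤ 1, n'.toReal⁻¹ / s = (1 - τ) * b.toReal⁻¹ + τ * (p.toReal⁻¹ - (finrank ℝ E : ℝ)⁻¹) ∧
      GagliardoNirenberg F μ b p (n' * .ofReal s) τ := by
  obtain ⟨θ, θ', hθ, hθ', hsum, hmid⟩ :=
    (Convex.mem_Icc (hlower.trans hupper)).1 ⟨hlower, hupper⟩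
  obtain rfl : θ' = 1 - θ := by linarith
  have hs₀ : 0 < s := zero_lt_one.trans hs
  have hs' : 0 < s - 1 := sub_pos.2 hs
  have hm : 1 ≤ s - θ * (s - 1) := by nlinarith
  refine ⟨(s - θ * (s - 1))⁻¹, inv_le_one_of_one_le₀ hm, ?_,
    gagliardoNirenberg_of_interpolation F μ n' p p' hb hs ⟨hθ, by linarith⟩ ?_⟩
  · have hn_inv := toReal_inv_add_toReal_inv_eq_one (finrank ℝ E) n'
    have hp_inv := toReal_inv_add_toReal_inv_eq_one p' p
    rw [ENNReal.toReal_natCast] at hn_inv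
    have hm₀ : s - θ * (s - 1) ≠ 0 := by positivity
    rw [eq_sub_of_add_eq' hn_inv, eq_sub_of_add_eq hp_inv] at hmid
    rw [eq_sub_of_add_eq' hn_inv]
    generalize b.toReal⁻¹ = b, p.toReal⁻¹ = p, (finrank ℝ E : ℝ)⁻¹ = d at *
    field_simp at hmid ⊢
    linear_combination -hmid
  · rw [toReal_inv_mul_ofReal _ hs'.le, toReal_inv_mul_ofReal _ hs₀.le]
    linarith

variable [Nontrivial E] {b p q : ℝ≥0∞} {τ : ℝ}

theorem exists_gagliardoNirenberg_toReal_inv_le (hp : 1 < p) (hb : b ≠ 0) (hbq : b < q)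
    (hq : q ≠ ∞) (hpq : p.toReal⁻¹ ≤ (finrank ℝ E : ℝ)⁻¹ + q.toReal⁻¹) :
    ∃ r ≠ 0, ∃ τ ≤ 1, r.toReal⁻¹ ≤ q.toReal⁻¹ ∧
      r.toReal⁻¹ = (1 - τ) * b.toReal⁻¹ + τ * (p.toReal⁻¹ - (finrank ℝ E : ℝ)⁻¹) ∧
      GagliardoNirenberg F μ b p r τ := by
  have hd : 1 ≤ (finrank ℝ E : ℝ≥0∞) := by exact_mod_cast (finrank_pos : 0 < finrank ℝ E)
  have := ENNReal.HolderConjugate.conjExponent hd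
  have := (ENNReal.HolderConjugate.conjExponent hp.le).symm
  set n' := ENNReal.conjExponent (finrank ℝ E)
  set p' := ENNReal.conjExponent p
  have hn_inv := toReal_inv_add_toReal_inv_eq_one (finrank ℝ E) n'
  have hp_inv := toReal_inv_add_toReal_inv_eq_one p' p
  rw [ENNReal.toReal_natCast] at hn_inv
  have hn₀ : n' ≠ 0 := ENNReal.HolderConjugate.ne_zero n' (finrank ℝ E)
  have hp'_top : p' ≠ ∞ := ((ENNReal.HolderConjugate.lt_top_iff_one_lt p' p).2 hp).ne
  have hp'_inv : 0 < p'.toReal⁻¹ :=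
    inv_pos.2 <| ENNReal.toReal_pos (ENNReal.HolderConjugate.ne_zero p' p) hp'_top
  have hb₀ : 0 < b.toReal := ENNReal.toReal_pos hb hbq.ne_top
  obtain ⟨s, hs, hsq, hlower, hupper⟩ := exists_sobolev_power (N := n'.toReal⁻¹) hb₀
    (ENNReal.toReal_mono hq hbq.le) hp'_inv (by linarith)
  have hs₀ : 0 < s := zero_lt_one.trans hs
  obtain ⟨τ, hτ, hscale, hGN⟩ :=
    exists_gagliardoNirenberg_mul_ofReal F μ (p := p) (n' := n') hb hs hlower hupper
  rw [← toReal_inv_mul_ofReal _ hs₀.le] at hsq hscale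
  exact ⟨n' * .ofReal s, by simp [hn₀, hs₀], τ, hτ, hsq, hscale, hGN⟩

theorem gagliardoNirenberg (hp : 1 < p) (hb : b ≠ 0) (hbq : b < q) (hq : q ≠ ∞)
    (hpq : p.toReal⁻¹ ≤ (finrank ℝ E : ℝ)⁻¹ + q.toReal⁻¹)
    (hτ : q.toReal⁻¹ = (1 - τ) * b.toReal⁻¹ + τ * (p.toReal⁻¹ - (finrank ℝ E : ℝ)⁻¹)) :
    GagliardoNirenberg F μ b p q τ := by
  obtain ⟨r, hr, τ₀, hτ₀, hrq, hscale, hGN⟩ :=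
    exists_gagliardoNirenberg_toReal_inv_le F μ hp hb hbq hq hpq
  have hqb : q.toReal⁻¹ < b.toReal⁻¹ :=
    inv_strictAnti₀ (ENNReal.toReal_pos hb hbq.ne_top) (ENNReal.toReal_strict_mono hq hbq)
  obtain ⟨φ, φ', hφ, hφ', hsum, hmid⟩ := (Convex.mem_Icc (hrq.trans hqb.le)).1 ⟨hrq, hqb.le⟩
  obtain rfl : φ' = 1 - φ := by linarith
  obtain rfl : φ * τ₀ = τ := by
    have hpos : 0 < b.toReal⁻¹ + (finrank ℝ E : ℝ)⁻¹ - p.toReal⁻¹ := by linarith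
    apply mul_right_cancel₀ hpos.ne'
    linear_combination -hτ - hmid + φ * hscale
  exact hGN.interpolate hb hr hbq.ne_bot hτ₀ ⟨hφ, by linarith⟩ (by linarith)

theorem stmt2_general (hp : 1 < p) (hb : b ≠ 0) (hbq : b < q) (hq : q ≠ ∞)
    (hpq : p.toReal⁻¹ ≤ (finrank ℝ E : ℝ)⁻¹ + q.toReal⁻¹)
    (hτ : q.toReal⁻¹ = (1 - τ) * b.toReal⁻¹ + τ * (p.toReal⁻¹ - (finrank ℝ E : ℝ)⁻¹)) :
    ∃ C > (0 : ℝ), ∀ u : E → F, ContDiff ℝ 1 u → HasCompactSupport u →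
      (eLpNorm u q μ).toReal ≤
        C * (eLpNorm u b μ).toReal ^ (1 - τ) * (eLpNorm (fderiv ℝ u) p μ).toReal ^ τ := by
  have hqb_inv : q.toReal⁻¹ < b.toReal⁻¹ :=
    inv_strictAnti₀ (ENNReal.toReal_pos hb hbq.ne_top) (ENNReal.toReal_strict_mono hq hbq)
  have hτ_mem : τ ∈ Icc 0 1 := by constructor <;> nlinarith
  exact (gagliardoNirenberg F μ hp hb hbq hq hpq hτ).exists_toReal_eLpNorm_le hτ_mem

end Main

/-- Gagliardo–Nirenberg interpolation inequality on ℝ^d. -/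
theorem stmt2 (d : ℕ) (hd : 1 ≤ d) (σ : ℝ) (hσ : 0 < σ)
    (hσd : σ * d < 2 * (σ + 1)) :
    ∃ C > (0 : ℝ), ∀ u : EuclideanSpace ℝ (Fin d) → ℂ,
      ContDiff ℝ 1 u → HasCompactSupport u →
      (eLpNorm u (ENNReal.ofReal (2 + 2 * σ)) volume).toReal ≤
        C * (eLpNorm u 2 volume).toReal ^ (1 - σ * d / (2 * (1 + σ))) *
          (eLpNorm (fun x => ‖fderiv ℝ u x‖) 2 volume).toReal ^ (σ * d / (2 * (1 + σ))) := by
  have : Nonempty (Fin d) := ⟨⟨0, hd⟩⟩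
  have hd₀ : (0 : ℝ) < d := by exact_mod_cast hd
  have hq : (2 : ℝ≥0∞) < .ofReal (2 + 2 * σ) := by
    rw [← ENNReal.ofReal_ofNat, ENNReal.ofReal_lt_ofReal_iff] <;> linarith
  have hq_toReal : (ENNReal.ofReal (2 + 2 * σ)).toReal = 2 + 2 * σ :=
    ENNReal.toReal_ofReal (by linarith)
  simp only [eLpNorm_norm]
  refine stmt2_general ℂ volume (by norm_num) (by norm_num) hq ENNReal.ofReal_ne_top ?_ ?_
  all_goals rw [hq_toReal, finrank_euclideanSpace_fin, ENNReal.toReal_ofNat]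
  · field_simp
    linarith
  · field_simp
    ring
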